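/- arXiv:math/0511730 — 2 statements merged into one kernel-verified Lean document; each statement's English description precedes it below -/
import Mathlib

section
/- Let ψ : Perm(Fin n) → T be the monoid homomorphism with ψ(s_i) = σ_i. Then for all permutations w, v ∈ Perm(Fin n), the elements ψ(w⁻¹)τ_1ψ(w) and ψ(v⁻¹)τ_1ψ(v) of T commute; i.e., all conjugates of τ_1 by units commute with each other. -/
/-!
The presentation of `IT_n` (the greatest factorizable inverse submonoid of the dual
symmetric inverse monoid) from Kudryavtseva–Mazorchuk, Section 4.

Generators: `Sum.inl i` represents `σ_{i+1}` and `Sum.inr i` represents `τ_{i+1}`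
for `i : Fin (n-1)` (so the paper's indices `1, …, n-1` correspond to `i.val + 1`).
-/

/-- Generator type: `Sum.inl i` is `σ_{i+1}`, `Sum.inr i` is `τ_{i+1}`. -/
abbrev ITGen (n : ℕ) := Fin (n - 1) ⊕ Fin (n - 1)

/-- The word `σ_{i+1}` in the free monoid. -/
def fσ {n : ℕ} (i : Fin (n - 1)) : FreeMonoid (ITGen n) := FreeMonoid.of (Sum.inl i)

/-- The word `τ_{i+1}` in the free monoid. -/
def fτ {n : ℕ} (i : Fin (n - 1)) : FreeMonoid (ITGen n) := FreeMonoid.of (Sum.inr i)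

/-- The defining relations of the presentation of `IT_n`. -/
inductive ITRel (n : ℕ) : FreeMonoid (ITGen n) → FreeMonoid (ITGen n) → Prop
  | sigma_sq (i) : ITRel n (fσ i * fσ i) 1
  | sigma_comm (i j) (h : 1 < Nat.dist i.1 j.1) : ITRel n (fσ i * fσ j) (fσ j * fσ i)
  | braid (i j) (h : Nat.dist i.1 j.1 = 1) :
      ITRel n (fσ i * fσ j * fσ i) (fσ j * fσ i * fσ j)
  | tau_idem (i) : ITRel n (fτ i * fτ i) (fτ i)
  | tau_comm (i j) (h : i ≠ j) : ITRel n (fτ i * fτ j) (fτ j * fτ i)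
  | tau_sigma (i) : ITRel n (fτ i * fσ i) (fτ i)
  | sigma_tau (i) : ITRel n (fσ i * fτ i) (fτ i)
  | tau_sigma_comm (i j) (h : 1 < Nat.dist i.1 j.1) : ITRel n (fτ i * fσ j) (fσ j * fτ i)
  | sigma_tau_sigma (i j) (h : Nat.dist i.1 j.1 = 1) :
      ITRel n (fσ i * fτ j * fσ i) (fσ j * fτ i * fσ j)
  | tau_sigma_tau (i j) (h : Nat.dist i.1 j.1 = 1) :
      ITRel n (fτ i * fσ j * fτ i) (fτ i * fτ j)

/-- The monoid `T` given by the presentation above. -/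
abbrev ITMonoid (n : ℕ) := PresentedMonoid (ITRel n)

/-- The generator `σ_{i+1}` of `T`. -/
def σI {n : ℕ} (i : Fin (n - 1)) : ITMonoid n := PresentedMonoid.of (ITRel n) (Sum.inl i)

/-- The generator `τ_{i+1}` of `T`. -/
def τI {n : ℕ} (i : Fin (n - 1)) : ITMonoid n := PresentedMonoid.of (ITRel n) (Sum.inr i)

/-- The point `i` of `{1, …, n}` (0-based: `i.val`). -/
def lo {n : ℕ} (i : Fin (n - 1)) : Fin n := ⟨i.1, by have := i.2; omega⟩

/-- The point `i + 1` of `{1, …, n}` (0-based: `i.val + 1`). -/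
def hi {n : ℕ} (i : Fin (n - 1)) : Fin n := ⟨i.1 + 1, by have := i.2; omega⟩

/-- The adjacent transposition `s_{i+1} = (i+1, i+2)` of the symmetric group on `{1, …, n}`. -/
def sPerm {n : ℕ} (i : Fin (n - 1)) : Equiv.Perm (Fin n) := Equiv.swap (lo i) (hi i)

/-!
Conjugation through `ψ` makes the symmetric group act on `T`, and the relations say exactly how
`s_i` moves `τ_j`. The stabilizer of `τ_1` contains every `s_i` with `i ≠ 2`, hence every
permutation preserving `{1, 2}`; moreover `s_i s_{i+1}` carries `τ_i` to `τ_{i+1}`. So a conjugate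
of `τ_i` depends only on the image of the pair `{i, i + 1}`. Two pairs of points meeting in `k`
points can be carried simultaneously to `{1, 2}` and `{3 - k, 4 - k}`, which reduces the claim to
the commutation of `τ_1` with `τ_{3-k}`.
-/

open Equiv MulAction
open scoped Pointwise Finset

section Perm

variable {α : Type*} [Finite α]

theorem perm_mem_of_forall_swap_apply_mem [DecidableEq α] {H : Subgroup (Perm α)} {g : Perm α}
    (h : ∀ x, swap x (g x) ∈ H) : g ∈ H := by
  let S : Set (Perm α) := {f | f.IsSwap ∧ f ∈ H}
  have closure_le : Subgroup.closure S ≤ H := (Subgroup.closure_le H).2 fun _ hf => hf.2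
  refine closure_le ((mem_closure_isSwap fun _ hf => hf.1).2 ⟨Set.toFinite _, fun x => ?_⟩)
  by_cases hx : x = g x
  · rw [← hx]
    exact mem_orbit_self x
  · exact ⟨⟨swap x (g x), Subgroup.subset_closure ⟨⟨x, g x, hx, rfl⟩, h x⟩⟩,
      swap_apply_left x (g x)⟩

theorem exists_perm_comp_eq {β : Type*} (f f' : α → β)
    (h : ∀ b, Nat.card {x // f x = b} = Nat.card {x // f' x = b}) :
    ∃ g : Perm α, ∀ x, f' (g x) = f x :=
  ⟨ofFiberEquiv fun b => (Finite.card_eq.1 (h b)).some, ofFiberEquiv_map _⟩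

theorem exists_perm_smul_eq_and_smul_eq [DecidableEq α] {A B A' B' : Finset α}
    (hA : #A = #A') (hB : #B = #B') (hAB : #(A ∩ B) = #(A' ∩ B')) :
    ∃ g : Perm α, g • A = A' ∧ g • B = B' := by
  have := Fintype.ofFinite α
  let membership (C D : Finset α) (x : α) : Bool × Bool := (decide (x ∈ C), decide (x ∈ D))
  have card_fiber (C D : Finset α) (b : Bool × Bool) :
      Nat.card {x // membership C D x = b} = match b with
        | (true, true) => #(C ∩ D)
        | (true, false) => #C - #(C ∩ D)
        | (false, true) => #D - #(C ∩ D)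
        | (false, false) => Fintype.card α - (#C + #D - #(C ∩ D)) := by
    rw [Nat.card_eq_fintype_card, Fintype.card_subtype]
    rcases b with ⟨_ | _, _ | _⟩
    · rw [← Finset.card_union, ← Finset.card_compl]
      congr 1; ext x; simp [membership]
    · rw [← Finset.card_sdiff]
      congr 1; ext x; simp [membership, and_comm]
    · rw [Finset.inter_comm, ← Finset.card_sdiff]
      congr 1; ext x; simp [membership]
    · congr 1; ext x; simp [membership]
  obtain ⟨g, hg⟩ := exists_perm_comp_eq (membership A B) (membership A' B') fun b => by
    simp only [card_fiber, hA, hB, hAB]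
  simp only [membership, Prod.mk.injEq, decide_eq_decide, ← Perm.smul_def] at hg
  refine ⟨g, ?_, ?_⟩ <;> ext x
  · rw [← Finset.inv_smul_mem_iff, ← (hg _).1, smul_inv_smul]
  · rw [← Finset.inv_smul_mem_iff, ← (hg _).2, smul_inv_smul]

end Perm

section AdjacentTranspositions

variable {n : ℕ}

theorem sPerm_mul_self (i : Fin (n - 1)) : sPerm i * sPerm i = 1 := swap_mul_self _ _

theorem swap_mem_of_sPerm_mem {H : Subgroup (Perm (Fin n))} {x y : Fin n} (hxy : x ≤ y)
    (h : ∀ i, x ≤ lo i → lo i < y → sPerm i ∈ H) : swap x y ∈ H := by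
  obtain ⟨b, hb⟩ := y
  induction b, (show x.1 ≤ b from hxy) using Nat.le_induction with
  | base => exact swap_self x ▸ one_mem H
  | succ b hxb ih =>
    have swap_mem : swap x ⟨b, by omega⟩ ∈ H :=
      ih (by omega) hxb fun i hi hib => h i hi (hib.trans (Nat.lt_succ_self b))
    exact SubmonoidClass.swap_mem_trans H swap_mem
      (h ⟨b, by omega⟩ hxb (Nat.lt_succ_self b))

/-- The pair of neighbouring points `{i, i + 1}` interchanged by `sPerm i`; it indexes the
conjugates of `τ_i`. -/
def adjPair (i : Fin (n - 1)) : Finset (Fin n) := Finset.Icc (lo i) (hi i)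

theorem mem_adjPair {i : Fin (n - 1)} {x : Fin n} :
    x ∈ adjPair i ↔ x.1 = i.1 ∨ x.1 = i.1 + 1 := by
  simp only [adjPair, Finset.mem_Icc, Fin.le_def, lo, hi]
  omega

theorem card_adjPair (i : Fin (n - 1)) : #(adjPair i) = 2 := by
  simp only [adjPair, Fin.card_Icc, lo, hi]
  omega

theorem card_adjPair_inter_adjPair {i j : Fin (n - 1)} (hij : i ≤ j) :
    #(adjPair i ∩ adjPair j) = 2 - (j.1 - i.1) := by
  have inter_eq : adjPair i ∩ adjPair j = Finset.Icc (lo j) (hi i) := by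
    ext x
    simp only [adjPair, Finset.mem_inter, Finset.mem_Icc, Fin.le_def, lo, hi] at hij ⊢
    omega
  rw [inter_eq, Fin.card_Icc]
  simp only [lo, hi]
  omega

theorem sPerm_smul_adjPair_comm {i j : Fin (n - 1)} (hij : Nat.dist i.1 j.1 = 1) :
    sPerm i • adjPair j = sPerm j • adjPair i := by
  ext x
  simp only [← Finset.inv_smul_mem_iff, sPerm, swap_inv, Perm.smul_def, mem_adjPair,
    swap_apply_def, apply_ite Fin.val, Fin.ext_iff, lo, hi, Nat.dist] at hij ⊢
  split_ifs <;> omega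

end AdjacentTranspositions

section Action

variable {n : ℕ} {X : Type*} [MulAction (Perm (Fin n)) X] {t : Fin (n - 1) → X}

theorem exists_perm_smul_eq_of_sPerm_smul_comm
    (hadj : ∀ i j : Fin (n - 1), Nat.dist i.1 j.1 = 1 → sPerm i • t j = sPerm j • t i)
    (h0 : 0 < n - 1) (i : Fin (n - 1)) : ∃ g : Perm (Fin n), g • t ⟨0, h0⟩ = t i := by
  obtain ⟨i, hi⟩ := i
  induction i with
  | zero => exact ⟨1, one_smul _ _⟩
  | succ i ih =>
    obtain ⟨g, hg⟩ := ih (by omega)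
    refine ⟨sPerm ⟨i, by omega⟩ * sPerm ⟨i + 1, hi⟩ * g, ?_⟩
    rw [mul_smul, hg, mul_smul, hadj _ _ (by simp [Nat.dist]), ← mul_smul, sPerm_mul_self, one_smul]

theorem smul_eq_of_smul_adjPair_zero_eq
    (hfix : ∀ i j : Fin (n - 1), Nat.dist i.1 j.1 ≠ 1 → sPerm i • t j = t j)
    (h0 : 0 < n - 1) {g : Perm (Fin n)} (hg : g • adjPair ⟨0, h0⟩ = adjPair ⟨0, h0⟩) :
    g • t ⟨0, h0⟩ = t ⟨0, h0⟩ := by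
  have swap_mem {x y : Fin n} (hxy : x ≤ y) (hmem : x.1 < 2 ↔ y.1 < 2) :
      swap x y ∈ stabilizer (Perm (Fin n)) (t ⟨0, h0⟩) :=
    swap_mem_of_sPerm_mem hxy fun i hxi hiy => hfix _ _ <| by
      simp only [Fin.le_def, Fin.lt_def, lo, Nat.dist] at hxi hiy ⊢
      omega
  refine perm_mem_of_forall_swap_apply_mem (H := stabilizer _ _) fun x => ?_
  have hmem : x.1 < 2 ↔ (g x).1 < 2 := by
    have := Finset.smul_mem_smul_finset_iff (s := adjPair ⟨0, h0⟩) (b := x) g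
    rw [hg, Perm.smul_def, mem_adjPair, mem_adjPair] at this
    dsimp only at this
    omega
  rcases le_total x (g x) with hx | hx
  · exact swap_mem hx hmem
  · rw [swap_comm]
    exact swap_mem hx hmem.symm

theorem smul_eq_of_smul_adjPair_eq
    (hfix : ∀ i j : Fin (n - 1), Nat.dist i.1 j.1 ≠ 1 → sPerm i • t j = t j)
    (hadj : ∀ i j : Fin (n - 1), Nat.dist i.1 j.1 = 1 → sPerm i • t j = sPerm j • t i)
    {i j : Fin (n - 1)} {g : Perm (Fin n)} (hg : g • adjPair i = adjPair j) :
    g • t i = t j := by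
  have h0 : 0 < n - 1 := i.pos
  have exists_perm (k : Fin (n - 1)) :
      ∃ w : Perm (Fin n), w • t ⟨0, h0⟩ = t k ∧ w • adjPair ⟨0, h0⟩ = adjPair k := by
    simpa using exists_perm_smul_eq_of_sPerm_smul_comm (t := fun k => (t k, adjPair k))
      (fun i j hij => Prod.ext (hadj i j hij) (sPerm_smul_adjPair_comm hij)) h0 k
  obtain ⟨u, hu, hu'⟩ := exists_perm i
  obtain ⟨v, hv, hv'⟩ := exists_perm j
  have stab : (v⁻¹ * (g * u)) • adjPair ⟨0, h0⟩ = adjPair ⟨0, h0⟩ := by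
    rw [mul_smul, mul_smul, hu', hg, inv_smul_eq_iff, hv']
  have := smul_eq_of_smul_adjPair_zero_eq hfix h0 stab
  rwa [mul_smul, mul_smul, hu, inv_smul_eq_iff, hv] at this

end Action

theorem exists_perm_smul_adjPair_eq {n : ℕ} (i j : Fin (n - 1)) (g h : Perm (Fin n)) :
    ∃ (k l : Fin (n - 1)) (u : Perm (Fin n)),
      u • g • adjPair i = adjPair k ∧ u • h • adjPair j = adjPair l := by
  have card_smul (g : Perm (Fin n)) (i : Fin (n - 1)) : #(g • adjPair i) = 2 := by
    rw [Finset.card_smul_finset, card_adjPair]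
  let m := 2 - #(g • adjPair i ∩ h • adjPair j)
  have inter_le : #(g • adjPair i ∩ h • adjPair j) ≤ 2 :=
    (Finset.card_le_card Finset.inter_subset_left).trans_eq (card_smul g i)
  have hm : m < n - 1 := by
    have union_le := Finset.card_le_univ (g • adjPair i ∪ h • adjPair j)
    rw [Finset.card_union, card_smul, card_smul, Fintype.card_fin] at union_le
    omega
  refine ⟨⟨0, i.pos⟩, ⟨m, hm⟩, exists_perm_smul_eq_and_smul_eq ?_ ?_ ?_⟩
  · rw [card_smul, card_adjPair]
  · rw [card_smul, card_adjPair]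
  · rw [card_adjPair_inter_adjPair (Nat.zero_le m)]
    exact (Nat.sub_sub_self inter_le).symm

theorem commute_smul_smul_of_sPerm_smul {n : ℕ} {M : Type*} [Monoid M]
    [MulDistribMulAction (Perm (Fin n)) M] {t : Fin (n - 1) → M}
    (hfix : ∀ i j : Fin (n - 1), Nat.dist i.1 j.1 ≠ 1 → sPerm i • t j = t j)
    (hadj : ∀ i j : Fin (n - 1), Nat.dist i.1 j.1 = 1 → sPerm i • t j = sPerm j • t i)
    (hcomm : ∀ i j, Commute (t i) (t j)) (g h : Perm (Fin n)) (i j : Fin (n - 1)) :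
    Commute (g • t i) (h • t j) := by
  obtain ⟨k, l, u, hk, hl⟩ := exists_perm_smul_adjPair_eq i j g h
  have smul_left : u • g • t i = t k := by
    rw [← mul_smul] at hk ⊢
    exact smul_eq_of_smul_adjPair_eq hfix hadj hk
  have smul_right : u • h • t j = t l := by
    rw [← mul_smul] at hl ⊢
    exact smul_eq_of_smul_adjPair_eq hfix hadj hl
  rw [eq_inv_smul_iff.2 smul_left, eq_inv_smul_iff.2 smul_right]
  exact (hcomm k l).map (MulDistribMulAction.toMonoidHom M u⁻¹)

section Conjugation

variable {G M : Type*} [Group G] [Monoid M]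

/-- The action `g • x = ψ g * x * ψ g⁻¹` of a group on a monoid induced by a homomorphism `ψ`
into it. It is a definition rather than an instance because it depends on `ψ`. -/
abbrev conjAction (ψ : G →* M) : MulDistribMulAction G M :=
  MulDistribMulAction.compHom M (ConjAct.toConjAct.toMonoidHom.comp ψ.toHomUnits)

theorem conjAction_smul (ψ : G →* M) (g : G) (x : M) :
    letI := conjAction ψ
    g • x = ψ g * x * ψ g⁻¹ := rfl

end Conjugation

theorem presentedMonoid_mk_eq_mk {α : Type*} {rels : FreeMonoid α → FreeMonoid α → Prop}
    {a b : FreeMonoid α} (h : rels a b) :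
    PresentedMonoid.mk rels a = PresentedMonoid.mk rels b :=
  Quotient.sound (ConGen.Rel.of _ _ h)

namespace ITMonoid

variable {n : ℕ}

theorem σI_mul_self (i : Fin (n - 1)) : σI i * σI i = 1 := presentedMonoid_mk_eq_mk (.sigma_sq i)

theorem σI_mul_τI_mul_σI_of_dist_ne_one {i j : Fin (n - 1)} (hij : Nat.dist i.1 j.1 ≠ 1) :
    σI i * τI j * σI i = τI j := by
  rcases eq_or_ne i j with rfl | hne
  · have sigma_tau : σI i * τI i = τI i := presentedMonoid_mk_eq_mk (.sigma_tau i)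
    have tau_sigma : τI i * σI i = τI i := presentedMonoid_mk_eq_mk (.tau_sigma i)
    rw [sigma_tau, tau_sigma]
  · have hdist : 1 < Nat.dist j.1 i.1 := by
      rw [Ne, Fin.ext_iff] at hne
      simp only [Nat.dist] at hij ⊢
      omega
    have tau_sigma_comm : τI j * σI i = σI i * τI j :=
      presentedMonoid_mk_eq_mk (.tau_sigma_comm j i hdist)
    rw [← tau_sigma_comm, mul_assoc, σI_mul_self, mul_one]

theorem σI_mul_τI_mul_σI_comm {i j : Fin (n - 1)} (hij : Nat.dist i.1 j.1 = 1) :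
    σI i * τI j * σI i = σI j * τI i * σI j :=
  presentedMonoid_mk_eq_mk (.sigma_tau_sigma i j hij)

theorem commute_τI_τI (i j : Fin (n - 1)) : Commute (τI i) (τI j) := by
  rcases eq_or_ne i j with rfl | hij
  · exact Commute.refl _
  · exact presentedMonoid_mk_eq_mk (.tau_comm i j hij)

end ITMonoid

theorem IT_conjugates_commute_general {n : ℕ} (ψ : Perm (Fin n) →* ITMonoid n)
    (hψ : ∀ i : Fin (n - 1), ψ (sPerm i) = σI i) (w v : Perm (Fin n)) (i j : Fin (n - 1)) :
    Commute (ψ w⁻¹ * τI i * ψ w) (ψ v⁻¹ * τI j * ψ v) := by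
  let := conjAction ψ
  have sPerm_smul (i : Fin (n - 1)) (x : ITMonoid n) : sPerm i • x = σI i * x * σI i := by
    rw [conjAction_smul, inv_eq_of_mul_eq_one_left (sPerm_mul_self i), hψ]
  have commute_smul : Commute (w⁻¹ • τI i) (v⁻¹ • τI j) :=
    commute_smul_smul_of_sPerm_smul
      (fun i j hij => by rw [sPerm_smul, ITMonoid.σI_mul_τI_mul_σI_of_dist_ne_one hij])
      (fun i j hij => by rw [sPerm_smul, sPerm_smul, ITMonoid.σI_mul_τI_mul_σI_comm hij])
      ITMonoid.commute_τI_τI w⁻¹ v⁻¹ i j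
  simpa only [conjAction_smul, inv_inv] using commute_smul

/-- Lemma `lemma103` of Kudryavtseva–Mazorchuk: all conjugates of `τ_1` by units of `T`
commute with each other. -/
theorem IT_conjugates_commute (n : ℕ) (hn : 2 ≤ n)
    (ψ : Equiv.Perm (Fin n) →* ITMonoid n)
    (hψ : ∀ i : Fin (n - 1), ψ (sPerm i) = σI i)
    (w v : Equiv.Perm (Fin n)) :
    Commute (ψ w⁻¹ * τI ⟨0, by omega⟩ * ψ w) (ψ v⁻¹ * τI ⟨0, by omega⟩ * ψ v) := by
  exact IT_conjugates_commute_general ψ hψ w v _ _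
end

section
/- The monoid T is finite, and its cardinality satisfies |T| ≤ Σ_{λ ⊢ n} (n!)² / Π_{i=1}^n (λ^{(i)}!·(i!)^{2λ^{(i)}}), where the sum is over all partitions λ of n and λ^{(i)} denotes the number of parts of λ equal to i (each quotient being an exact natural-number division). -/
/-!
By the Coxeter presentation of the symmetric group, the `σ_i` define a homomorphism `φ` from `S_n`
to `T`; the presentation itself is obtained by counting cosets, which shows that the abstract
Coxeter group of type `A` has at most `n!` elements. Conjugating the `τ_i` by `φ` produces commuting
idempotents `e a b` indexed by pairs of points, and a product of them depends only on the
equivalence relation `r` generated by the pairs involved. Hence every element of `T` has the form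
`φ g * E r * φ k⁻¹`.

Up to changing `g` and `k`, only the partition `λ` of `n` given by the class sizes of `r` matters.
For fixed `r`, the product does not change when `(g, k)` is multiplied on the right by `(u, v)`,
where `u` and `v` preserve `r` and induce the same permutation of its classes. Such a pair consists
of a size-preserving permutation of the classes and two permutations fixing each class, so there are
`Π λ^(i)! (i!)^(2 λ^(i))` of them, and at most `(n!)²` divided by this number many elements of shape
`λ`.
-/

section

open Equiv Pointwise

/-! ### The Coxeter presentation of the symmetric group -/

section InvolutionPair

variable {M : Type*} [Monoid M] {a b : M}

lemma mul_pow_two_eq_one_iff_commute (ha : a * a = 1) (hb : b * b = 1) :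
    (a * b) ^ 2 = 1 ↔ a * b = b * a := by
  rw [sq]
  constructor <;> grind

lemma mul_pow_three_eq_one_iff_braid (ha : a * a = 1) (hb : b * b = 1) :
    (a * b) ^ 3 = 1 ↔ a * b * a = b * a * b := by
  rw [pow_three]
  constructor <;> grind

end InvolutionPair

/-- The Coxeter relations of type `A m`, written without inverses so that they make sense in any
monoid. -/
structure CoxeterARelations {M : Type*} [Monoid M] {m : ℕ} (s : Fin m → M) : Prop where
  mul_self (i) : s i * s i = 1
  comm (i j : Fin m) (h : 1 < Nat.dist i j) : s i * s j = s j * s i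
  braid (i j : Fin m) (h : Nat.dist i j = 1) : s i * s j * s i = s j * s i * s j

namespace CoxeterARelations

variable {M : Type*} [Monoid M] {m : ℕ}

theorem iff_isLiftable {s : Fin m → M} :
    CoxeterARelations s ↔ (CoxeterMatrix.A m).IsLiftable s := by
  have matrix_eq_two (i j : Fin m) (h : 1 < Nat.dist i j) : CoxeterMatrix.A m i j = 2 := by
    simp only [Nat.dist] at h
    simp only [CoxeterMatrix.A, Matrix.of_apply]
    grind
  have matrix_eq_three (i j : Fin m) (h : Nat.dist i j = 1) : CoxeterMatrix.A m i j = 3 := by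
    simp only [Nat.dist] at h
    simp only [CoxeterMatrix.A, Matrix.of_apply]
    grind
  constructor
  · intro h i j
    rcases Nat.lt_trichotomy (Nat.dist i j) 1 with hij | hij | hij
    · obtain rfl : i = j := Fin.ext (Nat.eq_of_dist_eq_zero (by omega))
      simp [h.mul_self]
    · rw [matrix_eq_three i j hij, mul_pow_three_eq_one_iff_braid (h.mul_self i) (h.mul_self j)]
      exact h.braid i j hij
    · rw [matrix_eq_two i j hij, mul_pow_two_eq_one_iff_commute (h.mul_self i) (h.mul_self j)]
      exact h.comm i j hij
  · intro h
    have mul_self (i) : s i * s i = 1 := by simpa using h i i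
    refine ⟨mul_self, fun i j hij => ?_, fun i j hij => ?_⟩
    · rw [← mul_pow_two_eq_one_iff_commute (mul_self i) (mul_self j), ← matrix_eq_two i j hij]
      exact h i j
    · rw [← mul_pow_three_eq_one_iff_braid (mul_self i) (mul_self j), ← matrix_eq_three i j hij]
      exact h i j

theorem tail {s : Fin (m + 1) → M} (h : CoxeterARelations s) : CoxeterARelations (Fin.tail s) where
  mul_self i := h.mul_self i.succ
  comm i j hij := h.comm i.succ j.succ (by simpa [Nat.dist] using hij)
  braid i j hij := h.braid i.succ j.succ (by simpa [Nat.dist] using hij)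

variable {s : Fin m → M}

theorem partialProd_mul_of_lt (h : CoxeterARelations s) (k : Fin (m + 1)) (i : Fin m)
    (hki : (k : ℕ) < i) : Fin.partialProd s k * s i = s i * Fin.partialProd s k := by
  induction k using Fin.induction with
  | zero => simp
  | succ j ih =>
    simp only [Fin.val_succ, Fin.val_castSucc] at hki ih
    have hji : s j * s i = s i * s j := h.comm j i (by simp only [Nat.dist]; omega)
    rw [Fin.partialProd_succ, mul_assoc, hji, ← mul_assoc, ih (by omega), mul_assoc]

theorem partialProd_succ_mul (h : CoxeterARelations s) (j : Fin m) :
    Fin.partialProd s j.succ * s j = Fin.partialProd s j.castSucc := by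
  rw [Fin.partialProd_succ, mul_assoc, h.mul_self, mul_one]

theorem partialProd_mul_of_succ_lt (h : CoxeterARelations s) (k : Fin (m + 1)) (i i' : Fin m)
    (hi' : (i' : ℕ) = i + 1) (hik : (i' : ℕ) < k) :
    Fin.partialProd s k * s i = s i' * Fin.partialProd s k := by
  induction k using Fin.induction with
  | zero => simp at hik
  | succ j ih =>
    simp only [Fin.val_succ, Fin.val_castSucc] at hik ih
    rcases (Nat.lt_succ_iff.1 hik).lt_or_eq with hlt | heq
    · have hji : s j * s i = s i * s j := h.comm j i (by simp only [Nat.dist]; omega)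
      rw [Fin.partialProd_succ, mul_assoc, hji, ← mul_assoc, ih hlt, mul_assoc]
    · obtain rfl : i' = j := Fin.ext heq
      have hcast : i'.castSucc = i.succ := Fin.ext (by simpa using hi')
      have hbraid := h.braid i i' (by simp only [Nat.dist]; omega)
      have hcomm := h.partialProd_mul_of_lt i.castSucc i' (by simp [hi'])
      calc Fin.partialProd s i'.succ * s i
          = Fin.partialProd s i.castSucc * (s i * s i' * s i) := by
            simp only [Fin.partialProd_succ, hcast, mul_assoc]
        _ = Fin.partialProd s i.castSucc * s i' * s i * s i' := by simp only [hbraid, mul_assoc]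
        _ = s i' * Fin.partialProd s i'.succ := by
            simp only [hcomm, Fin.partialProd_succ, hcast, mul_assoc]

-- The partial products `s 0 * ⋯ * s (k - 1)` represent the right cosets of the parabolic submonoid
-- generated by `s 1, s 2, …`, and right multiplication by a generator permutes these cosets.
theorem closure_range_subset_mul {s : Fin (m + 1) → M} (h : CoxeterARelations s) :
    (Submonoid.closure (Set.range s) : Set M) ⊆
      Submonoid.closure (Set.range (Fin.tail s)) * Set.range (Fin.partialProd s) := by
  intro x hx
  have tail_mem (i : Fin (m + 1)) (hi : 0 < (i : ℕ)) :
      s i ∈ Submonoid.closure (Set.range (Fin.tail s)) :=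
    Submonoid.subset_closure ⟨i.pred (by rintro rfl; simp at hi), by simp [Fin.tail]⟩
  induction hx using Submonoid.closure_induction_right with
  | one => exact ⟨1, one_mem _, 1, ⟨0, by simp⟩, one_mul 1⟩
  | mul_right x _ _ hs ih =>
    obtain ⟨i, rfl⟩ := hs
    obtain ⟨y, hy, _, ⟨k, rfl⟩, rfl⟩ := ih
    have of_comm (i' : Fin (m + 1)) (hi' : 0 < (i' : ℕ))
        (hcomm : Fin.partialProd s k * s i = s i' * Fin.partialProd s k) :
        y * Fin.partialProd s k * s i ∈ (Submonoid.closure (Set.range (Fin.tail s)) : Set M) *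
          Set.range (Fin.partialProd s) :=
      ⟨y * s i', mul_mem hy (tail_mem i' hi'), _, ⟨k, rfl⟩, by simp only [hcomm, mul_assoc]⟩
    rcases Nat.lt_trichotomy i k with hik | hik | hik
    · obtain ⟨j, rfl⟩ : ∃ j : Fin (m + 1), k = j.succ :=
        Fin.exists_succ_eq.2 (by rintro rfl; simp at hik) |>.imp fun _ => Eq.symm
      rcases (Nat.lt_succ_iff.1 hik).lt_or_eq with hij | hij
      · exact of_comm ⟨i + 1, by omega⟩ (by simp)
          (h.partialProd_mul_of_succ_lt _ i _ rfl (by simpa using hij))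
      · obtain rfl : i = j := Fin.ext hij
        exact ⟨y, hy, _, ⟨i.castSucc, rfl⟩, by simp only [mul_assoc, h.partialProd_succ_mul]⟩
    · obtain rfl : k = i.castSucc := Fin.ext hik.symm
      exact ⟨y, hy, _, ⟨i.succ, rfl⟩, by simp only [Fin.partialProd_succ, mul_assoc]⟩
    · exact of_comm i (by omega) (h.partialProd_mul_of_lt k i hik)

theorem finite_closure_range_and_ncard_le {s : Fin m → M} (h : CoxeterARelations s) :
    (Submonoid.closure (Set.range s) : Set M).Finite ∧
      (Submonoid.closure (Set.range s) : Set M).ncard ≤ (m + 1).factorial := by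
  induction m with
  | zero => simp [Set.range_eq_empty]
  | succ m ih =>
    have hsub := h.closure_range_subset_mul
    set H : Set M := (Submonoid.closure (Set.range (Fin.tail s)) : Set M)
    set D : Set M := Set.range (Fin.partialProd s)
    obtain ⟨hH, hH_card⟩ : H.Finite ∧ H.ncard ≤ (m + 1).factorial := ih h.tail
    have hD : D.Finite := Set.finite_range _
    have hD_card : D.ncard ≤ m + 2 := (Finite.card_range_le _).trans_eq (by simp)
    refine ⟨(hH.mul hD).subset hsub, ?_⟩
    calc (Submonoid.closure (Set.range s) : Set M).ncard
        ≤ (H * D).ncard := Set.ncard_le_ncard hsub (hH.mul hD)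
      _ ≤ (H ×ˢ D).ncard := Set.image_mul_prod (s := H) (t := D) ▸ Set.ncard_image_le (hH.prod hD)
      _ = H.ncard * D.ncard := Set.ncard_prod
      _ ≤ (m + 1).factorial * (m + 2) := Nat.mul_le_mul hH_card hD_card
      _ = (m + 2).factorial := by rw [Nat.factorial_succ (m + 1), mul_comm]

end CoxeterARelations

lemma swap_braid {α : Type*} [DecidableEq α] {a b c : α} (hab : a ≠ b) (hbc : b ≠ c)
    (hac : a ≠ c) : swap a b * swap b c * swap a b = swap b c * swap a b * swap b c := by
  rw [swap_mul_swap_mul_swap hab hac, swap_comm a b, swap_comm b c,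
    swap_mul_swap_mul_swap hbc.symm hac.symm, swap_comm]

theorem coxeterARelations_swap (m : ℕ) :
    CoxeterARelations fun i : Fin m => swap i.castSucc i.succ where
  mul_self i := swap_mul_self _ _
  comm i j hij := by
    simp only [Nat.dist] at hij
    refine (Perm.disjoint_swap_swap ?_).commute.eq
    grind
  braid i j hij := by
    have adjacent (i j : Fin m) (hij : (j : ℕ) = i + 1) :
        swap i.castSucc i.succ * swap j.castSucc j.succ * swap i.castSucc i.succ =
          swap j.castSucc j.succ * swap i.castSucc i.succ * swap j.castSucc j.succ := by
      have hj : j.castSucc = i.succ := Fin.ext (by simpa using hij)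
      rw [hj]
      exact swap_braid i.castSucc_lt_succ.ne (hj ▸ j.castSucc_lt_succ.ne)
        (i.castSucc_lt_succ.trans (hj ▸ j.castSucc_lt_succ)).ne
    simp only [Nat.dist] at hij
    rcases (by omega : (j : ℕ) = i + 1 ∨ (i : ℕ) = j + 1) with h | h
    · exact adjacent i j h
    · exact (adjacent j i h).symm

theorem finite_coxeterGroupA_and_card_le (m : ℕ) :
    Finite (CoxeterMatrix.A m).Group ∧ Nat.card (CoxeterMatrix.A m).Group ≤ (m + 1).factorial := by
  let cs := (CoxeterMatrix.A m).toCoxeterSystem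
  have h : CoxeterARelations cs.simple :=
    CoxeterARelations.iff_isLiftable.2 cs.simple_mul_simple_pow
  simpa [cs.submonoid_closure_range_simple, Set.finite_univ_iff, Set.ncard_univ] using
    h.finite_closure_range_and_ncard_le

/-- The action of the abstract Coxeter group of type `A` on `m + 1` points, sending each simple
reflection to an adjacent transposition. -/
noncomputable def coxeterGroupAToPerm (m : ℕ) : (CoxeterMatrix.A m).Group →* Perm (Fin (m + 1)) :=
  (CoxeterMatrix.A m).toCoxeterSystem.lift
    ⟨_, CoxeterARelations.iff_isLiftable.1 (coxeterARelations_swap m)⟩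

lemma coxeterGroupAToPerm_bijective (m : ℕ) : Function.Bijective (coxeterGroupAToPerm m) := by
  obtain ⟨_, hcard⟩ := finite_coxeterGroupA_and_card_le m
  have hsurj : Function.Surjective (coxeterGroupAToPerm m) := by
    rw [← MonoidHom.mrange_eq_top, eq_top_iff, ← Perm.mclosure_swap_castSucc_succ,
      Submonoid.closure_le]
    rintro _ ⟨i, rfl⟩
    exact ⟨_, CoxeterSystem.lift_apply_simple _ _ i⟩
  exact (Nat.bijective_iff_surjective_and_card _).2 ⟨hsurj,
    (hcard.trans_eq (by rw [Nat.card_perm, Nat.card_fin])).antisymm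
      (Nat.card_le_card_of_surjective _ hsurj)⟩

/-- The adjacent transpositions make the symmetric group a Coxeter group of type `A`. -/
noncomputable def permCoxeterSystem (m : ℕ) :
    CoxeterSystem (CoxeterMatrix.A m) (Perm (Fin (m + 1))) :=
  (CoxeterMatrix.A m).toCoxeterSystem.map
    (MulEquiv.ofBijective (coxeterGroupAToPerm m) (coxeterGroupAToPerm_bijective m))

lemma permCoxeterSystem_simple {m : ℕ} (i : Fin m) :
    (permCoxeterSystem m).simple i = swap i.castSucc i.succ :=
  CoxeterSystem.lift_apply_simple _ _ i

theorem CoxeterARelations.exists_monoidHom {M : Type*} [Monoid M] {m : ℕ} {s : Fin m → M}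
    (h : CoxeterARelations s) :
    ∃ φ : Perm (Fin (m + 1)) →* M, ∀ i : Fin m, φ (swap i.castSucc i.succ) = s i :=
  ⟨(permCoxeterSystem m).lift ⟨s, iff_isLiftable.1 h⟩, fun i => by
    rw [← permCoxeterSystem_simple, CoxeterSystem.lift_apply_simple]⟩

section SwapGeneration

variable {α : Type*} [Finite α] [DecidableEq α]

theorem mem_submonoid_of_forall_swap_mem (C : Submonoid (Perm α)) {g : Perm α}
    (hg : ∀ x, swap (g x) x ∈ C) : g ∈ C := by
  let S : Set (Perm α) := {f | f.IsSwap ∧ f ∈ C}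
  have swap_mem_closure (x : α) : swap (g x) x ∈ Subgroup.closure S := by
    rcases eq_or_ne (g x) x with hfix | hmoved
    · rw [hfix, swap_self]
      exact one_mem _
    · exact Subgroup.subset_closure ⟨⟨g x, x, hmoved, rfl⟩, hg x⟩
  have hgS : g ∈ (Subgroup.closure S).toSubmonoid :=
    (mem_closure_isSwap fun f hf => hf.1).2
      ⟨Set.toFinite _, fun x => (swap_mem_closure_isSwap fun f hf => hf.1).1 (swap_mem_closure x)⟩
  rw [Subgroup.closure_toSubmonoid_of_finite] at hgS
  exact Submonoid.closure_le.2 (fun f hf => hf.2) hgS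

end SwapGeneration

/-! ### Idempotents attached to equivalence relations -/

/-- A homomorphism `φ` from a symmetric group to a monoid, together with elements `e a b` that
behave like the idempotents merging the points `a` and `b`: they commute, are permuted by `φ`,
absorb the transposition of `a` and `b`, and compose like the generators of equivalence
relations. -/
structure MergeSystem {M α : Type*} [Monoid M] [DecidableEq α] (φ : Perm α →* M)
    (e : α → α → M) : Prop where
  refl (a) : e a a = 1
  symm (a b) : e a b = e b a
  comm (a b c d) : e a b * e c d = e c d * e a b
  trans (a b c) : e a b * e b c = e a b * e a c
  semiconjBy (g a b) : SemiconjBy (φ g) (e a b) (e (g a) (g b))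
  mul_map_swap (a b) : e a b * φ (swap a b) = e a b

namespace MergeSystem

variable {M α : Type*} [Monoid M] [DecidableEq α] {φ : Perm α →* M} {e : α → α → M}

theorem mul_self (h : MergeSystem φ e) (a b : α) : e a b * e a b = e a b := by
  simpa [h.refl, h.symm b a] using h.trans a b a

/-- The equivalence relation of those pairs whose merging does not change `x`. -/
def absorbed (h : MergeSystem φ e) (x : M) : Setoid α where
  r a b := e a b * x = x
  iseqv :=
    { refl a := by rw [h.refl, one_mul]
      symm {a b} hab := by rwa [h.symm]
      trans {a b c} hab hbc := by
        calc e a c * x = e a c * e a b * x := by rw [mul_assoc, hab]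
          _ = e a b * e b c * x := by rw [h.comm, h.trans]
          _ = x := by rw [mul_assoc, hbc, hab] }

theorem absorbed_iff (h : MergeSystem φ e) {x : M} {a b : α} :
    h.absorbed x a b ↔ e a b * x = x := Iff.rfl

theorem pairwise_commute (h : MergeSystem φ e) (s : Set (α × α)) :
    s.Pairwise (Function.onFun Commute fun p => e p.1 p.2) :=
  fun _ _ _ _ _ => h.comm _ _ _ _

variable [Fintype α]

open Classical in
/-- The product of all `e a b` with `a` and `b` in the same class of `r`: the idempotent merging
each class of `r` into one block. -/
noncomputable def blockIdem (h : MergeSystem φ e) (r : Setoid α) : M :=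
  Finset.noncommProd {p : α × α | r p.1 p.2} (fun p => e p.1 p.2) (h.pairwise_commute _)

theorem mul_blockIdem (h : MergeSystem φ e) {r : Setoid α} {a b : α} (hab : r a b) :
    e a b * h.blockIdem r = h.blockIdem r := by
  classical
  have hmem : (a, b) ∈ ({p : α × α | r p.1 p.2} : Finset (α × α)) := by simpa using hab
  rw [blockIdem, ← Finset.mul_noncommProd_erase _ hmem _ (h.pairwise_commute _), ← mul_assoc,
    h.mul_self]

theorem commute_blockIdem (h : MergeSystem φ e) (r : Setoid α) (a b : α) :
    Commute (e a b) (h.blockIdem r) :=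
  Finset.noncommProd_commute _ _ _ _ fun _ _ => h.comm _ _ _ _

theorem blockIdem_mul_eq_self (h : MergeSystem φ e) {r : Setoid α} {x : M}
    (hx : ∀ a b, r a b → e a b * x = x) : h.blockIdem r * x = x := by
  refine Finset.noncommProd_induction _ _ _ (fun y => y * x = x) ?_ (one_mul x) ?_
  · intro y z hy hz
    rw [mul_assoc, hz, hy]
  · intro p hp
    exact hx _ _ (by simpa using hp)

theorem mul_blockIdem_eq_self (h : MergeSystem φ e) {r : Setoid α} {x : M}
    (hx : ∀ a b, r a b → x * e a b = x) : x * h.blockIdem r = x := by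
  refine Finset.noncommProd_induction _ _ _ (fun y => x * y = x) ?_ (mul_one x) ?_
  · intro y z hy hz
    rw [← mul_assoc, hy, hz]
  · intro p hp
    exact hx _ _ (by simpa using hp)

theorem blockIdem_bot (h : MergeSystem φ e) : h.blockIdem ⊥ = 1 := by
  refine mul_one (h.blockIdem ⊥) ▸ h.blockIdem_mul_eq_self ?_
  rintro a _ rfl
  rw [h.refl, one_mul]

theorem blockIdem_mul (h : MergeSystem φ e) (r : Setoid α) (a b : α) :
    h.blockIdem r * e a b = h.blockIdem (h.absorbed (h.blockIdem r * e a b)) := by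
  set x := h.blockIdem r * e a b
  set r' := h.absorbed x
  have hr : r ≤ r' := fun {c d} hcd => by rw [h.absorbed_iff, ← mul_assoc, h.mul_blockIdem hcd]
  have hab : r' a b := by
    rw [h.absorbed_iff, ← mul_assoc, (h.commute_blockIdem r a b).eq, mul_assoc, h.mul_self]
  calc x = x * h.blockIdem r' := by
        refine (h.mul_blockIdem_eq_self fun c d hcd => ?_).symm
        rw [mul_assoc, h.comm, ← mul_assoc, ← (h.commute_blockIdem r c d).eq, mul_assoc]
        exact hcd
    _ = h.blockIdem r' := by
        rw [mul_assoc, h.mul_blockIdem hab]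
        exact h.blockIdem_mul_eq_self fun c d hcd => h.mul_blockIdem (hr hcd)

theorem map_mul_blockIdem_comap (h : MergeSystem φ e) (r : Setoid α) (g : Perm α) :
    φ g * h.blockIdem (r.comap g) = h.blockIdem r * φ g := by
  calc φ g * h.blockIdem (r.comap g) = h.blockIdem r * (φ g * h.blockIdem (r.comap g)) := by
        refine (h.blockIdem_mul_eq_self fun a b hab => ?_).symm
        obtain ⟨a, rfl⟩ := g.surjective a
        obtain ⟨b, rfl⟩ := g.surjective b
        rw [← mul_assoc, ← (h.semiconjBy g a b).eq, mul_assoc,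
          h.mul_blockIdem (r := r.comap g) hab]
    _ = h.blockIdem r * φ g := by
        rw [← mul_assoc]
        refine h.mul_blockIdem_eq_self fun a b hab => ?_
        rw [mul_assoc, (h.semiconjBy _ _ _).eq, ← mul_assoc, ← (h.commute_blockIdem r _ _).eq,
          h.mul_blockIdem (Setoid.comap_rel g r a b |>.1 hab)]

theorem blockIdem_mul_map (h : MergeSystem φ e) {r : Setoid α} {g : Perm α}
    (hg : ∀ a, r (g a) a) : h.blockIdem r * φ g = h.blockIdem r := by
  let C : Submonoid (Perm α) :=
    { carrier := {g | h.blockIdem r * φ g = h.blockIdem r}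
      one_mem' := by simp
      mul_mem' {g g'} hg hg' := by
        change _ = _ at hg hg'
        change _ = _
        rw [map_mul, ← mul_assoc, hg, hg'] }
  refine mem_submonoid_of_forall_swap_mem C fun a => ?_
  change h.blockIdem r * φ (swap (g a) a) = h.blockIdem r
  rw [← h.mul_blockIdem (hg a), (h.commute_blockIdem r _ _).eq, mul_assoc, h.mul_map_swap]

theorem map_mul_blockIdem (h : MergeSystem φ e) {r : Setoid α} {g : Perm α}
    (hg : ∀ a, r (g a) a) : φ g * h.blockIdem r = h.blockIdem r := by
  have hcomap : r.comap g = r := Setoid.ext fun a b =>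
    ⟨fun hab => r.trans (r.symm (hg a)) (r.trans hab (hg b)),
      fun hab => r.trans (hg a) (r.trans hab (r.symm (hg b)))⟩
  simpa only [hcomap, h.blockIdem_mul_map hg] using h.map_mul_blockIdem_comap r g

theorem exists_eq_blockIdem_mul_map (h : MergeSystem φ e)
    (hgen : Submonoid.closure (Set.range φ ∪ Set.range (Function.uncurry e)) = ⊤) (x : M) :
    ∃ r g, x = h.blockIdem r * φ g := by
  have hx : x ∈ Submonoid.closure (Set.range φ ∪ Set.range (Function.uncurry e)) :=
    hgen ▸ Submonoid.mem_top x
  induction hx using Submonoid.closure_induction_right with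
  | one => exact ⟨⊥, 1, by rw [h.blockIdem_bot, map_one, one_mul]⟩
  | mul_right x _ y hy ih =>
    obtain ⟨r, g, rfl⟩ := ih
    rcases hy with ⟨g', rfl⟩ | ⟨⟨a, b⟩, rfl⟩
    · exact ⟨r, g * g', by rw [map_mul, mul_assoc]⟩
    · exact ⟨_, g, by rw [← h.blockIdem_mul r (g a) (g b), Function.uncurry_apply_pair, mul_assoc,
        (h.semiconjBy _ _ _).eq, mul_assoc]⟩

end MergeSystem

/-! ### Counting elements of a given shape -/

section Counting

theorem exists_equiv_of_card_fiber_eq {α β ι κ : Type*} [Finite α] [Finite β] (f : α → ι)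
    (g : β → κ) (η : ι ≃ κ) (h : ∀ i, Nat.card {a // f a = i} = Nat.card {b // g b = η i}) :
    ∃ k : α ≃ β, ∀ a, g (k a) = η (f a) := by
  let fiberEquiv (i : ι) : {a // f a = i} ≃ {b // g b = η i} := (Finite.card_eq.1 (h i)).some
  exact ⟨(sigmaFiberEquiv f).symm.trans ((sigmaCongr η fiberEquiv).trans (sigmaFiberEquiv g)),
    fun a => (fiberEquiv (f a) ⟨a, rfl⟩).2⟩

theorem card_range_mul_card_le {G X K : Type*} [Group G] [Finite G] {f : G → X} {ι : K → G}
    (hι : Function.Injective ι) (hf : ∀ g k, f (g * ι k) = f g) :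
    Nat.card (Set.range f) * Nat.card K ≤ Nat.card G := by
  choose rep hrep using fun y : Set.range f => y.2
  rw [← Nat.card_prod]
  refine Nat.card_le_card_of_injective (fun p => rep p.1 * ι p.2) ?_
  rintro ⟨y, k⟩ ⟨y', k'⟩ hp
  dsimp only at hp
  obtain rfl : y = y' := Subtype.ext (by rw [← hrep y, ← hf (rep y) k, hp, hf, hrep])
  rw [hι (mul_left_cancel hp)]

end Counting

section Shape

variable {α : Type*}

/-- The number of elements in a class of the equivalence relation `r`. -/
noncomputable def classSize (r : Setoid α) (q : Quotient r) : ℕ :=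
  Nat.card {a // Quotient.mk r a = q}

theorem classSize_pos [Finite α] (r : Setoid α) (q : Quotient r) : 0 < classSize r q := by
  obtain ⟨a, ha⟩ := Quotient.exists_rep q
  exact Nat.card_pos_iff.2 ⟨⟨⟨a, ha⟩⟩, inferInstance⟩

theorem classSize_mem_Icc [Finite α] (r : Setoid α) (q : Quotient r) :
    classSize r q ∈ Finset.Icc 1 (Nat.card α) :=
  Finset.mem_Icc.2 ⟨classSize_pos r q, Finite.card_subtype_le _⟩

theorem exists_lift_perm_quotient [Finite α] {r : Setoid α} (π : Perm (Quotient r))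
    (hπ : classSize r ∘ π = classSize r) :
    ∃ k : Perm α, ∀ a, Quotient.mk r (k a) = π (Quotient.mk r a) :=
  exists_equiv_of_card_fiber_eq _ _ π fun q => (congrFun hπ q).symm

variable [Fintype α]

open Classical in
/-- The partition of the natural number `Nat.card α` formed by the class sizes of `r`. -/
noncomputable def shape (r : Setoid α) : Nat.Partition (Nat.card α) where
  parts := (Finset.univ : Finset (Quotient r)).val.map (classSize r)
  parts_pos hi := by
    obtain ⟨q, -, rfl⟩ := Multiset.mem_map.1 hi
    exact classSize_pos r q
  parts_sum := by
    change ∑ q, classSize r q = Nat.card α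
    simp only [classSize]
    rw [← Nat.card_sigma, Nat.card_congr (sigmaFiberEquiv _)]

theorem count_shape (r : Setoid α) (i : ℕ) :
    (shape r).parts.count i = Nat.card {q // classSize r q = i} := by
  classical
  rw [shape, Multiset.count_map, Nat.card_eq_fintype_card, Fintype.card_subtype, Finset.card,
    Finset.filter_val]
  simp only [eq_comm]

theorem exists_comap_eq_of_shape_eq {r r' : Setoid α} (h : shape r = shape r') :
    ∃ k : Perm α, r'.comap k = r := by
  obtain ⟨η, hη⟩ := exists_equiv_of_card_fiber_eq (classSize r) (classSize r') (Equiv.refl ℕ)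
    fun i => by rw [← count_shape, h, count_shape, refl_apply]
  obtain ⟨k, hk⟩ := exists_equiv_of_card_fiber_eq (Quotient.mk r) (Quotient.mk r') η
    fun q => (hη q).symm
  refine ⟨k, Setoid.ext fun a b => ?_⟩
  rw [Setoid.comap_rel, ← Quotient.eq, hk, hk, η.injective.eq_iff, Quotient.eq]

theorem card_perm_classSize (r : Setoid α) :
    Nat.card {π : Perm (Quotient r) // classSize r ∘ π = classSize r} =
      ∏ i ∈ Finset.Icc 1 (Nat.card α), ((shape r).parts.count i).factorial := by
  classical
  rw [Nat.card_eq_fintype_card, DomMulAct.stabilizer_card']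
  simp only [← Nat.card_eq_fintype_card, count_shape]
  refine Finset.prod_subset (Finset.image_subset_iff.2 fun q _ => classSize_mem_Icc r q) ?_
  intro i _ hi
  have : IsEmpty {q // classSize r q = i} :=
    ⟨fun q => hi (Finset.mem_image.2 ⟨q, Finset.mem_univ _, q.2⟩)⟩
  rw [Nat.card_of_isEmpty, Nat.factorial_zero]

theorem card_perm_mk (r : Setoid α) :
    Nat.card {g : Perm α // Quotient.mk r ∘ g = Quotient.mk r} =
      ∏ i ∈ Finset.Icc 1 (Nat.card α), i.factorial ^ (shape r).parts.count i := by
  classical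
  rw [Nat.card_eq_fintype_card, DomMulAct.stabilizer_card]
  simp only [← Nat.card_eq_fintype_card, count_shape]
  rw [← Finset.prod_fiberwise_of_maps_to (fun q _ => classSize_mem_Icc r q)]
  refine Finset.prod_congr rfl fun i _ => ?_
  rw [Nat.card_eq_fintype_card, Fintype.card_subtype]
  exact Finset.prod_eq_pow_card fun q hq => congrArg Nat.factorial (Finset.mem_filter.1 hq).2

end Shape

namespace MergeSystem

variable {M α : Type*} [Monoid M] [DecidableEq α] [Fintype α] {φ : Perm α →* M} {e : α → α → M}

/-- The two-sided multiple `φ g * blockIdem r * φ k⁻¹`. Inverting the second factor makes the pairs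
`(g, k)` giving the same value unions of left cosets of a subgroup. -/
noncomputable def blockProduct (h : MergeSystem φ e) (r : Setoid α) (x : Perm α × Perm α) : M :=
  φ x.1 * h.blockIdem r * φ x.2⁻¹

theorem blockProduct_comap_mul (h : MergeSystem φ e) (r : Setoid α) (k : Perm α)
    (x : Perm α × Perm α) : h.blockProduct (r.comap k) (x * (k, k)) = h.blockProduct r x := by
  calc φ (x.1 * k) * h.blockIdem (r.comap k) * φ (x.2 * k)⁻¹
      = φ x.1 * (φ k * h.blockIdem (r.comap k)) * φ k⁻¹ * φ x.2⁻¹ := by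
        simp only [mul_inv_rev, map_mul, mul_assoc]
    _ = φ x.1 * h.blockIdem r * φ (k * k⁻¹) * φ x.2⁻¹ := by
        rw [h.map_mul_blockIdem_comap, map_mul]
        simp only [mul_assoc]
    _ = φ x.1 * h.blockIdem r * φ x.2⁻¹ := by rw [mul_inv_cancel, map_one, mul_one]

theorem blockProduct_mul (h : MergeSystem φ e) {r : Setoid α} {g k : Perm α}
    (hg : ∀ a, r (g a) a) (hk : ∀ a, r (k a) a) (x : Perm α × Perm α) :
    h.blockProduct r (x * (g, k)) = h.blockProduct r x := by
  have hk' (a : α) : r (k⁻¹ a) a := r.symm (by simpa using hk (k⁻¹ a))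
  simp only [blockProduct, Prod.fst_mul, Prod.snd_mul, mul_inv_rev, map_mul]
  rw [mul_assoc (φ x.1), h.map_mul_blockIdem hg, ← mul_assoc, mul_assoc (φ x.1),
    h.blockIdem_mul_map hk']

theorem range_blockProduct_eq_of_shape_eq (h : MergeSystem φ e) {r r' : Setoid α}
    (hr : shape r = shape r') : Set.range (h.blockProduct r) = Set.range (h.blockProduct r') := by
  obtain ⟨k, rfl⟩ := exists_comap_eq_of_shape_eq hr
  have hcomp : h.blockProduct (r'.comap k) ∘ Equiv.mulRight (k, k) = h.blockProduct r' :=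
    funext (h.blockProduct_comap_mul r' k)
  rw [← hcomp, EquivLike.range_comp]

theorem exists_mem_range_blockProduct (h : MergeSystem φ e)
    (hgen : Submonoid.closure (Set.range φ ∪ Set.range (Function.uncurry e)) = ⊤) (x : M) :
    ∃ r, x ∈ Set.range (h.blockProduct r) := by
  obtain ⟨r, g, rfl⟩ := h.exists_eq_blockIdem_mul_map hgen x
  exact ⟨r, (1, g⁻¹), by simp [blockProduct]⟩

theorem exists_stabilizing_embedding (h : MergeSystem φ e) (r : Setoid α) :
    ∃ ι : {π : Perm (Quotient r) // classSize r ∘ π = classSize r} ×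
        {g : Perm α // Quotient.mk r ∘ g = Quotient.mk r} ×
        {g : Perm α // Quotient.mk r ∘ g = Quotient.mk r} → Perm α × Perm α,
      Function.Injective ι ∧ ∀ x k, h.blockProduct r (x * ι k) = h.blockProduct r x := by
  choose lift hlift using fun π : {π : Perm (Quotient r) // classSize r ∘ π = classSize r} =>
    exists_lift_perm_quotient π.1 π.2
  refine ⟨fun k => (lift k.1, lift k.1) * (k.2.1.1, k.2.2.1), ?_, ?_⟩
  · rintro ⟨π, a, b⟩ ⟨π', a', b'⟩ hk
    obtain ⟨hfst, hsnd⟩ : lift π * a = lift π' * a' ∧ lift π * b = lift π' * b' := Prod.mk.inj hk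
    have mk_apply (g : {g : Perm α // Quotient.mk r ∘ g = Quotient.mk r}) (x : α) :
        Quotient.mk r (g.1 x) = Quotient.mk r x := congrFun g.2 x
    have hπ : π = π' := by
      refine Subtype.ext (Equiv.ext fun q => ?_)
      obtain ⟨x, rfl⟩ := Quotient.exists_rep q
      have hx := congrArg (fun g : Perm α => Quotient.mk r (g x)) hfst
      simpa only [Perm.mul_apply, hlift, mk_apply] using hx
    subst hπ
    obtain rfl : a = a' := Subtype.ext (mul_left_cancel hfst)
    obtain rfl : b = b' := Subtype.ext (mul_left_cancel hsnd)
    rfl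
  · rintro x ⟨π, a, b⟩
    have hcomap : r.comap (lift π) = r := Setoid.ext fun x y => by
      rw [Setoid.comap_rel, ← Quotient.eq, hlift, hlift, π.1.injective.eq_iff, Quotient.eq]
    have hdiag := h.blockProduct_comap_mul r (lift π) x
    rw [hcomap] at hdiag
    rw [← mul_assoc, h.blockProduct_mul (fun y => Quotient.eq.1 (congrFun a.2 y))
      (fun y => Quotient.eq.1 (congrFun b.2 y)), hdiag]

theorem card_range_blockProduct_le (h : MergeSystem φ e) (r : Setoid α) :
    (Set.range (h.blockProduct r)).ncard ≤ (Nat.card α).factorial ^ 2 /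
      ∏ i ∈ Finset.Icc 1 (Nat.card α), (((shape r).parts.count i).factorial *
        i.factorial ^ (2 * (shape r).parts.count i)) := by
  obtain ⟨ι, hι, hstab⟩ := h.exists_stabilizing_embedding r
  have hcard := card_range_mul_card_le hι hstab
  rw [Nat.le_div_iff_mul_le (Finset.prod_pos fun i _ => by positivity)]
  simpa only [Nat.card_prod, Nat.card_perm, card_perm_classSize, card_perm_mk, sq, two_mul,
    pow_add, Finset.prod_mul_distrib, Nat.card_coe_set_eq] using hcard

end MergeSystem

theorem MergeSystem.finite_and_card_le {M α : Type*} [Monoid M] [DecidableEq α] [Finite α]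
    {φ : Perm α →* M} {e : α → α → M} (h : MergeSystem φ e)
    (hgen : Submonoid.closure (Set.range φ ∪ Set.range (Function.uncurry e)) = ⊤) :
    Finite M ∧ Nat.card M ≤ ∑ p : Nat.Partition (Nat.card α),
      (Nat.card α).factorial ^ 2 / ∏ i ∈ Finset.Icc 1 (Nat.card α),
        ((p.parts.count i).factorial * i.factorial ^ (2 * p.parts.count i)) := by
  have := Fintype.ofFinite α
  let ofShape (p : Nat.Partition (Nat.card α)) : Set M :=
    {x | ∃ r, shape r = p ∧ x ∈ Set.range (h.blockProduct r)}
  have ofShape_shape (r : Setoid α) : ofShape (shape r) = Set.range (h.blockProduct r) :=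
    Set.Subset.antisymm
      (fun _ ⟨_, hr', hx⟩ => h.range_blockProduct_eq_of_shape_eq hr' ▸ hx) fun _ hx => ⟨r, rfl, hx⟩
  have iUnion_ofShape : ⋃ p, ofShape p = Set.univ := Set.eq_univ_of_forall fun x => by
    obtain ⟨r, hx⟩ := h.exists_mem_range_blockProduct hgen x
    exact Set.mem_iUnion.2 ⟨shape r, r, rfl, hx⟩
  have eq_empty_or_shape_eq (p) : ofShape p = ∅ ∨ ∃ r, shape r = p :=
    (ofShape p).eq_empty_or_nonempty.imp_right fun ⟨_, r, hr, _⟩ => ⟨r, hr⟩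
  constructor
  · rw [← Set.finite_univ_iff, ← iUnion_ofShape]
    refine Set.finite_iUnion fun p => ?_
    obtain hempty | ⟨r, rfl⟩ := eq_empty_or_shape_eq p
    · exact hempty ▸ Set.finite_empty
    · exact ofShape_shape r ▸ Set.finite_range _
  · rw [← Set.ncard_univ, ← iUnion_ofShape]
    refine (Set.ncard_iUnion_le_of_fintype _).trans (Finset.sum_le_sum fun p _ => ?_)
    obtain hempty | ⟨r, rfl⟩ := eq_empty_or_shape_eq p
    · simp only [hempty, Set.ncard_empty, zero_le]
    · exact ofShape_shape r ▸ h.card_range_blockProduct_le r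

/-! ### Conjugates of the generators `τ` -/

theorem swap_mem_of_forall_adjacent_mem {m : ℕ} (C : Submonoid (Perm (Fin (m + 1))))
    {a b : Fin (m + 1)} (hab : a ≤ b)
    (hC : ∀ j : Fin m, a ≤ j.castSucc → swap j.castSucc j.succ ∈ C) : swap a b ∈ C := by
  induction b using Fin.induction with
  | zero =>
    obtain rfl : a = 0 := Fin.le_zero_iff.1 hab
    rw [swap_self]
    exact one_mem C
  | succ j ih =>
    rcases hab.eq_or_lt with rfl | hlt
    · rw [swap_self]
      exact one_mem C
    · have haj : a ≤ j.castSucc := Fin.le_castSucc_iff.2 hlt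
      exact SubmonoidClass.swap_mem_trans C (ih haj) (hC j haj)

theorem exists_perm_castLE {n k : ℕ} (f : Fin k → Fin n) (hf : Function.Injective f) :
    ∃ (hk : k ≤ n) (g : Perm (Fin n)), ∀ i, g (Fin.castLE hk i) = f i :=
  have hk : k ≤ n := by simpa using Fintype.card_le_of_injective f hf
  ⟨hk, Perm.exists_extending_pair (Fin.castLE hk) f (Fin.castLE_injective hk) hf⟩

/-- The defining relations of `ITMonoid (m + 1)` for two families of elements of a monoid. -/
structure ITRelations {M : Type*} [Monoid M] {m : ℕ} (s t : Fin m → M) : Prop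
    extends CoxeterARelations s where
  tau_idem (i) : t i * t i = t i
  tau_comm (i j) (hij : i ≠ j) : t i * t j = t j * t i
  tau_sigma (i) : t i * s i = t i
  sigma_tau (i) : s i * t i = t i
  tau_sigma_comm (i j : Fin m) (hij : 1 < Nat.dist i j) : t i * s j = s j * t i
  sigma_tau_sigma (i j : Fin m) (hij : Nat.dist i j = 1) : s i * t j * s i = s j * t i * s j
  tau_sigma_tau (i j : Fin m) (hij : Nat.dist i j = 1) : t i * s j * t i = t i * t j

theorem semiconjBy_map_inv {G M : Type*} [Group G] [Monoid M] {φ : G →* M} {g : G} {x y : M}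
    (h : SemiconjBy (φ g) x y) : SemiconjBy (φ g⁻¹) y x :=
  SemiconjBy.units_inv_symm_left (a := Units.map φ (toUnits g)) h

theorem eq_of_semiconjBy_map {G M : Type*} [Group G] [Monoid M] {φ : G →* M} {g : G} {x y z : M}
    (hy : SemiconjBy (φ g) x y) (hz : SemiconjBy (φ g) x z) : y = z :=
  ((Group.isUnit g).map φ).mul_right_cancel (hy.eq.symm.trans hz.eq)

section Points

variable {m : ℕ}

theorem exists_perm_pair {a b : Fin (m + 1)} (hab : a ≠ b) :
    ∃ (i : Fin m) (g : Perm (Fin (m + 1))), g i.castSucc = a ∧ g i.succ = b := by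
  obtain ⟨hm, g, hg⟩ := exists_perm_castLE ![a, b] (by
    rw [← List.nodup_ofFn]; simpa using hab)
  exact ⟨⟨0, by omega⟩, g, hg 0, hg 1⟩

theorem exists_perm_triple {a b c : Fin (m + 1)} (hab : a ≠ b) (hac : a ≠ c) (hbc : b ≠ c) :
    ∃ (i j : Fin m) (g : Perm (Fin (m + 1))), j.castSucc = i.succ ∧
      g i.castSucc = a ∧ g i.succ = b ∧ g j.succ = c := by
  obtain ⟨hm, g, hg⟩ := exists_perm_castLE ![a, b, c] (by
    rw [← List.nodup_ofFn]; simpa using ⟨⟨hab, hac⟩, hbc⟩)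
  exact ⟨⟨0, by omega⟩, ⟨1, by omega⟩, g, rfl, hg 0, hg 1, hg 2⟩

theorem exists_perm_quadruple {a b c d : Fin (m + 1)} (h : [a, b, c, d].Nodup) :
    ∃ (i j : Fin m) (g : Perm (Fin (m + 1))),
      g i.castSucc = a ∧ g i.succ = b ∧ g j.castSucc = c ∧ g j.succ = d := by
  obtain ⟨hm, g, hg⟩ := exists_perm_castLE ![a, b, c, d] (by
    rw [← List.nodup_ofFn]; simpa using h)
  exact ⟨⟨0, by omega⟩, ⟨2, by omega⟩, g, hg 0, hg 1, hg 2, hg 3⟩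

end Points

/-- The conjugate `φ g * t i * φ g⁻¹`, as a function of the pair of points `a = g i` and
`b = g (i + 1)`; it is `1` on the diagonal, which consists of the pairs not of this form. -/
noncomputable def mergeElement {M : Type*} [Monoid M] {m : ℕ} (φ : Perm (Fin (m + 1)) →* M)
    (t : Fin m → M) (a b : Fin (m + 1)) : M :=
  Function.extend (fun p : Fin m × Perm (Fin (m + 1)) => (p.2 p.1.castSucc, p.2 p.1.succ))
    (fun p => φ p.2 * t p.1 * φ p.2⁻¹) 1 (a, b)

theorem mergeElement_self {M : Type*} [Monoid M] {m : ℕ} (φ : Perm (Fin (m + 1)) →* M)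
    (t : Fin m → M) (a : Fin (m + 1)) : mergeElement φ t a a = 1 := by
  refine Function.extend_apply' _ _ _ ?_
  rintro ⟨⟨i, g⟩, hig⟩
  have heq : g i.castSucc = g i.succ := (congrArg Prod.fst hig).trans (congrArg Prod.snd hig).symm
  exact i.castSucc_lt_succ.ne (g.injective heq)

namespace ITRelations

variable {M : Type*} [Monoid M] {m : ℕ} {s t : Fin m → M} {φ : Perm (Fin (m + 1)) →* M}

theorem commute_map_tau_zero (h : ITRelations s t) (hφ : ∀ i, φ (swap i.castSucc i.succ) = s i)
    {i : Fin m} (hi : (i : ℕ) = 0) {g : Perm (Fin (m + 1))} (hg₀ : g i.castSucc = i.castSucc)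
    (hg₁ : g i.succ = i.succ) : Commute (φ g) (t i) := by
  let C : Submonoid (Perm (Fin (m + 1))) := (Submonoid.centralizer {t i}).comap φ
  have mem_C {g} : g ∈ C ↔ t i * φ g = φ g * t i := by
    simp [C, Submonoid.mem_centralizer_iff]
  have swap_mem {x y : Fin (m + 1)} (hx : 2 ≤ (x : ℕ)) (hxy : x ≤ y) : swap x y ∈ C := by
    refine swap_mem_of_forall_adjacent_mem C hxy fun j hxj => ?_
    rw [mem_C, hφ]
    refine h.tau_sigma_comm i j ?_
    simp only [Fin.le_def, Fin.val_castSucc] at hxj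
    simp only [Nat.dist]; omega
  suffices hgC : g ∈ C from (mem_C.1 hgC).symm
  refine mem_submonoid_of_forall_swap_mem C fun x => ?_
  have two_le {y : Fin (m + 1)} (hy₀ : y ≠ i.castSucc) (hy₁ : y ≠ i.succ) : 2 ≤ (y : ℕ) := by
    simp only [ne_eq, Fin.ext_iff, Fin.val_castSucc, Fin.val_succ] at hy₀ hy₁
    omega
  rcases eq_or_ne (g x) x with hfix | hmoved
  · rw [hfix, swap_self]
    exact one_mem C
  · have ne_of_fixed {y : Fin (m + 1)} (hy : g y = y) : x ≠ y ∧ g x ≠ y :=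
      ⟨fun hxy => hmoved (hxy ▸ hy),
        fun hgx => hmoved (g.injective (hgx.trans hy.symm) ▸ hy)⟩
    have hx : 2 ≤ (x : ℕ) := two_le (ne_of_fixed hg₀).1 (ne_of_fixed hg₁).1
    have hgx : 2 ≤ (g x : ℕ) := two_le (ne_of_fixed hg₀).2 (ne_of_fixed hg₁).2
    rcases le_total x (g x) with hle | hle
    · exact swap_comm x (g x) ▸ swap_mem hx hle
    · exact swap_mem hgx hle

theorem semiconjBy_mul_sigma (h : ITRelations s t) {i j : Fin m} (hij : Nat.dist i j = 1) :
    SemiconjBy (s i * s j) (t i) (t j) := by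
  calc s i * s j * t i = s i * (s j * t i * s j) * s j := by
        simp only [mul_assoc, h.mul_self, mul_one]
    _ = s i * (s i * t j * s i) * s j := by rw [h.sigma_tau_sigma i j hij]
    _ = t j * (s i * s j) := by simp only [← mul_assoc, h.mul_self, one_mul]

theorem exists_semiconjBy_tau_zero {s t : Fin (m + 1) → M} {φ : Perm (Fin (m + 2)) →* M}
    (h : ITRelations s t) (hφ : ∀ i, φ (swap i.castSucc i.succ) = s i) (i : Fin (m + 1)) :
    ∃ g : Perm (Fin (m + 2)), g 0 = i.castSucc ∧ g 1 = i.succ ∧ SemiconjBy (φ g) (t 0) (t i) := by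
  induction i using Fin.induction with
  | zero => exact ⟨1, rfl, rfl, by simp⟩
  | succ j ih =>
    obtain ⟨g, hg₀, hg₁, hg⟩ := ih
    have hlt : j.castSucc.castSucc < j.succ.castSucc := j.castSucc.castSucc_lt_succ
    have hlt' : j.succ.castSucc < j.succ.succ := j.succ.castSucc_lt_succ
    refine ⟨swap j.castSucc.castSucc j.castSucc.succ * swap j.succ.castSucc j.succ.succ * g,
      ?_, ?_, ?_⟩
    · rw [Perm.mul_apply, Perm.mul_apply, hg₀, swap_apply_of_ne_of_ne hlt.ne (hlt.trans hlt').ne,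
        swap_apply_left, Fin.castSucc_succ]
    · rw [Perm.mul_apply, Perm.mul_apply, hg₁, Fin.castSucc_succ, swap_apply_left]
      exact swap_apply_of_ne_of_ne (hlt.trans hlt').ne' hlt'.ne'
    · rw [map_mul, map_mul, hφ, hφ]
      exact (h.semiconjBy_mul_sigma (by simp [Nat.dist])).mul_left hg

theorem semiconjBy_tau (h : ITRelations s t) (hφ : ∀ i, φ (swap i.castSucc i.succ) = s i)
    {i j : Fin m} {g : Perm (Fin (m + 1))} (hg₀ : g i.castSucc = j.castSucc)
    (hg₁ : g i.succ = j.succ) : SemiconjBy (φ g) (t i) (t j) := by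
  obtain _ | k := m
  · exact i.elim0
  obtain ⟨a, ha₀, ha₁, ha⟩ := h.exists_semiconjBy_tau_zero hφ i
  obtain ⟨b, hb₀, hb₁, hb⟩ := h.exists_semiconjBy_tau_zero hφ j
  have hfix : SemiconjBy (φ (b⁻¹ * g * a)) (t 0) (t 0) :=
    h.commute_map_tau_zero hφ (by simp) (by simp [ha₀, hg₀, ← hb₀]) (by simp [ha₁, hg₁, ← hb₁])
  have hg : g = b * (b⁻¹ * g * a) * a⁻¹ := by group
  rw [hg, map_mul, map_mul]
  exact (hb.mul_left hfix).mul_left (semiconjBy_map_inv ha)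

theorem mergeElement_apply (h : ITRelations s t) (hφ : ∀ i, φ (swap i.castSucc i.succ) = s i)
    (g : Perm (Fin (m + 1))) (i : Fin m) :
    mergeElement φ t (g i.castSucc) (g i.succ) = φ g * t i * φ g⁻¹ := by
  refine Function.FactorsThrough.extend_apply
    (f := fun p : Fin m × Perm (Fin (m + 1)) => (p.2 p.1.castSucc, p.2 p.1.succ))
    (g := fun p => φ p.2 * t p.1 * φ p.2⁻¹) ?_ 1 (i, g)
  rintro ⟨i, g⟩ ⟨j, k⟩ hij
  obtain ⟨hg₀, hg₁⟩ := Prod.mk.inj hij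
  dsimp only at hg₀ hg₁ ⊢
  have hconj : SemiconjBy (φ (k⁻¹ * g)) (t i) (t j) :=
    h.semiconjBy_tau hφ (by simp [hg₀]) (by simp [hg₁])
  calc φ g * t i * φ g⁻¹ = φ k * (φ (k⁻¹ * g) * t i) * φ g⁻¹ := by
        rw [← mul_assoc, ← map_mul, mul_inv_cancel_left]
    _ = φ k * t j * φ k⁻¹ := by
        rw [hconj.eq, ← mul_assoc, mul_assoc, ← map_mul, mul_inv_cancel_right]

theorem semiconjBy_tau_mergeElement (h : ITRelations s t)
    (hφ : ∀ i, φ (swap i.castSucc i.succ) = s i) (g : Perm (Fin (m + 1))) (i : Fin m) :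
    SemiconjBy (φ g) (t i) (mergeElement φ t (g i.castSucc) (g i.succ)) := by
  rw [SemiconjBy, h.mergeElement_apply hφ, mul_assoc, ← map_mul, inv_mul_cancel, map_one, mul_one]

theorem mergeElement_castSucc_succ (h : ITRelations s t)
    (hφ : ∀ i, φ (swap i.castSucc i.succ) = s i) (i : Fin m) :
    mergeElement φ t i.castSucc i.succ = t i := by
  simpa using h.mergeElement_apply hφ 1 i

theorem semiconjBy_mergeElement (h : ITRelations s t)
    (hφ : ∀ i, φ (swap i.castSucc i.succ) = s i) (g : Perm (Fin (m + 1))) (a b : Fin (m + 1)) :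
    SemiconjBy (φ g) (mergeElement φ t a b) (mergeElement φ t (g a) (g b)) := by
  rcases eq_or_ne a b with rfl | hab
  · simp only [mergeElement_self, SemiconjBy.one_right]
  obtain ⟨i, k, rfl, rfl⟩ := exists_perm_pair hab
  have hgk := (h.semiconjBy_tau_mergeElement hφ (g * k) i).mul_left
    (semiconjBy_map_inv (h.semiconjBy_tau_mergeElement hφ k i))
  rwa [← map_mul, mul_inv_cancel_right] at hgk

theorem mergeElement_symm (h : ITRelations s t) (hφ : ∀ i, φ (swap i.castSucc i.succ) = s i)
    (a b : Fin (m + 1)) : mergeElement φ t a b = mergeElement φ t b a := by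
  rcases eq_or_ne a b with rfl | hab
  · rfl
  obtain ⟨i, g, rfl, rfl⟩ := exists_perm_pair hab
  have hflip := h.semiconjBy_tau_mergeElement hφ (g * swap i.castSucc i.succ) i
  rw [Perm.mul_apply, Perm.mul_apply, swap_apply_left, swap_apply_right] at hflip
  have hsigma : SemiconjBy (φ (swap i.castSucc i.succ)) (t i) (t i) :=
    (hφ i).symm ▸ (h.sigma_tau i).trans (h.tau_sigma i).symm
  refine eq_of_semiconjBy_map (h.semiconjBy_tau_mergeElement hφ g i) ?_
  simpa only [← map_mul, mul_swap_mul_self] using hflip.mul_left hsigma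

theorem mergeElement_mul_map_swap (h : ITRelations s t)
    (hφ : ∀ i, φ (swap i.castSucc i.succ) = s i) (a b : Fin (m + 1)) :
    mergeElement φ t a b * φ (swap a b) = mergeElement φ t a b := by
  rcases eq_or_ne a b with rfl | hab
  · rw [swap_self, ← Perm.one_def, map_one, mul_one]
  obtain ⟨i, g, rfl, rfl⟩ := exists_perm_pair hab
  have htau := h.semiconjBy_tau_mergeElement hφ g i
  have hsigma : SemiconjBy (φ g) (s i) (φ (swap (g i.castSucc) (g i.succ))) :=
    hφ i ▸ SemiconjBy.map (by rw [SemiconjBy, swap_apply_apply, inv_mul_cancel_right]) φ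
  exact eq_of_semiconjBy_map (htau.mul_right hsigma) ((h.tau_sigma i).symm ▸ htau)

theorem mergeElement_commute_of_perm (h : ITRelations s t)
    (hφ : ∀ i, φ (swap i.castSucc i.succ) = s i) (g : Perm (Fin (m + 1))) (i j : Fin m) :
    Commute (mergeElement φ t (g i.castSucc) (g i.succ))
      (mergeElement φ t (g j.castSucc) (g j.succ)) := by
  rcases eq_or_ne i j with rfl | hij
  · exact Commute.refl _
  have hi := h.semiconjBy_tau_mergeElement hφ g i
  have hj := h.semiconjBy_tau_mergeElement hφ g j
  exact eq_of_semiconjBy_map (hi.mul_right hj) (h.tau_comm i j hij ▸ hj.mul_right hi)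

theorem mergeElement_comm (h : ITRelations s t) (hφ : ∀ i, φ (swap i.castSucc i.succ) = s i)
    (a b c d : Fin (m + 1)) :
    Commute (mergeElement φ t a b) (mergeElement φ t c d) := by
  rcases eq_or_ne a b with rfl | hab
  · exact (mergeElement_self φ t a).symm ▸ Commute.one_left _
  rcases eq_or_ne c d with rfl | hcd
  · exact (mergeElement_self φ t c).symm ▸ Commute.one_right _
  have of_shared {x y z : Fin (m + 1)} (hxy : x ≠ y) (hyz : y ≠ z) :
      Commute (mergeElement φ t x y) (mergeElement φ t y z) := by
    rcases eq_or_ne x z with rfl | hxz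
    · exact h.mergeElement_symm hφ x y ▸ Commute.refl _
    obtain ⟨i, j, g, hij, rfl, rfl, rfl⟩ := exists_perm_triple hxy hxz hyz
    exact hij ▸ h.mergeElement_commute_of_perm hφ g i j
  rcases eq_or_ne a c with rfl | hac
  · exact h.mergeElement_symm hφ b a ▸ of_shared hab.symm hcd
  rcases eq_or_ne a d with rfl | had
  · exact h.mergeElement_symm hφ b a ▸ h.mergeElement_symm hφ a c ▸ of_shared hab.symm hcd.symm
  rcases eq_or_ne b c with rfl | hbc
  · exact of_shared hab hcd
  rcases eq_or_ne b d with rfl | hbd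
  · exact h.mergeElement_symm hφ b c ▸ of_shared hab hbc
  · obtain ⟨i, j, g, rfl, rfl, rfl, rfl⟩ := exists_perm_quadruple (a := a) (b := b) (c := c)
      (d := d) (by simp [*])
    exact h.mergeElement_commute_of_perm hφ g i j

theorem semiconjBy_sigma_tau_sigma (h : ITRelations s t)
    (hφ : ∀ i, φ (swap i.castSucc i.succ) = s i) (g : Perm (Fin (m + 1))) {i j : Fin m}
    (hij : j.castSucc = i.succ) :
    SemiconjBy (φ g) (s j * t i * s j) (mergeElement φ t (g i.castSucc) (g j.succ)) := by
  have hi : i.castSucc < j.castSucc := hij ▸ i.castSucc_lt_succ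
  have hj := h.semiconjBy_tau_mergeElement hφ (g * swap j.castSucc j.succ) i
  rw [Perm.mul_apply, Perm.mul_apply, ← hij, swap_apply_left,
    swap_apply_of_ne_of_ne hi.ne (hi.trans j.castSucc_lt_succ).ne] at hj
  have hsigma : SemiconjBy (φ (swap j.castSucc j.succ)) (s j * t i * s j) (t i) := by
    simp only [hφ, SemiconjBy, ← mul_assoc, h.mul_self, one_mul]
  simpa only [← map_mul, mul_swap_mul_self] using hj.mul_left hsigma

theorem mergeElement_trans (h : ITRelations s t)
    (hφ : ∀ i, φ (swap i.castSucc i.succ) = s i) (a b c : Fin (m + 1)) :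
    mergeElement φ t a b * mergeElement φ t b c = mergeElement φ t a b * mergeElement φ t a c := by
  rcases eq_or_ne a b with rfl | hab
  · rfl
  have hidem : mergeElement φ t a b * mergeElement φ t a b = mergeElement φ t a b := by
    obtain ⟨i, g, rfl, rfl⟩ := exists_perm_pair hab
    have htau := h.semiconjBy_tau_mergeElement hφ g i
    exact eq_of_semiconjBy_map (htau.mul_right htau) ((h.tau_idem i).symm ▸ htau)
  rcases eq_or_ne a c with rfl | hac
  · rw [h.mergeElement_symm hφ b a, hidem, mergeElement_self, mul_one]
  rcases eq_or_ne b c with rfl | hbc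
  · rw [hidem, mergeElement_self, mul_one]
  obtain ⟨i, j, g, hij, rfl, rfl, rfl⟩ := exists_perm_triple hab hac hbc
  have hdist : Nat.dist i j = 1 := by
    simp only [Fin.ext_iff, Fin.val_castSucc, Fin.val_succ] at hij
    simp only [Nat.dist]
    omega
  have hprod : t i * t j = t i * (s j * t i * s j) := by
    simp only [← mul_assoc, h.tau_sigma_tau i j hdist]
    rw [mul_assoc, h.tau_sigma]
  have hab := h.semiconjBy_tau_mergeElement hφ g i
  have hbc := hij ▸ h.semiconjBy_tau_mergeElement hφ g j
  have hac := h.semiconjBy_sigma_tau_sigma hφ g hij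
  exact eq_of_semiconjBy_map (hab.mul_right hbc) (hprod ▸ hab.mul_right hac)

theorem mergeSystem (h : ITRelations s t) (hφ : ∀ i, φ (swap i.castSucc i.succ) = s i) :
    MergeSystem φ (mergeElement φ t) where
  refl := mergeElement_self φ t
  symm := h.mergeElement_symm hφ
  comm := h.mergeElement_comm hφ
  trans := h.mergeElement_trans hφ
  semiconjBy := h.semiconjBy_mergeElement hφ
  mul_map_swap := h.mergeElement_mul_map_swap hφ

end ITRelations

theorem ITRelations.finite_and_card_le {M : Type*} [Monoid M] {m : ℕ} {s t : Fin m → M}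
    (h : ITRelations s t) (hgen : Submonoid.closure (Set.range s ∪ Set.range t) = ⊤) :
    Finite M ∧ Nat.card M ≤ ∑ p : Nat.Partition (m + 1),
      (m + 1).factorial ^ 2 / ∏ i ∈ Finset.Icc 1 (m + 1),
        ((p.parts.count i).factorial * i.factorial ^ (2 * p.parts.count i)) := by
  obtain ⟨φ, hφ⟩ := h.toCoxeterARelations.exists_monoidHom
  have hsub : Set.range s ∪ Set.range t ⊆
      Set.range φ ∪ Set.range (Function.uncurry (mergeElement φ t)) := by
    apply Set.union_subset_union
    · rintro _ ⟨i, rfl⟩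
      exact ⟨_, hφ i⟩
    · rintro _ ⟨i, rfl⟩
      exact ⟨(i.castSucc, i.succ), h.mergeElement_castSucc_succ hφ i⟩
  have hcard := (h.mergeSystem hφ).finite_and_card_le
    (top_le_iff.1 (hgen ▸ Submonoid.closure_mono hsub))
  rwa [Nat.card_fin] at hcard

theorem itRelations_generators (n : ℕ) : ITRelations (σI (n := n)) τI where
  mul_self i := PresentedMonoid.mk_eq_mk_of_rel (.sigma_sq i)
  comm i j hij := PresentedMonoid.mk_eq_mk_of_rel (.sigma_comm i j hij)
  braid i j hij := PresentedMonoid.mk_eq_mk_of_rel (.braid i j hij)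
  tau_idem i := PresentedMonoid.mk_eq_mk_of_rel (.tau_idem i)
  tau_comm i j hij := PresentedMonoid.mk_eq_mk_of_rel (.tau_comm i j hij)
  tau_sigma i := PresentedMonoid.mk_eq_mk_of_rel (.tau_sigma i)
  sigma_tau i := PresentedMonoid.mk_eq_mk_of_rel (.sigma_tau i)
  tau_sigma_comm i j hij := PresentedMonoid.mk_eq_mk_of_rel (.tau_sigma_comm i j hij)
  sigma_tau_sigma i j hij := PresentedMonoid.mk_eq_mk_of_rel (.sigma_tau_sigma i j hij)
  tau_sigma_tau i j hij := PresentedMonoid.mk_eq_mk_of_rel (.tau_sigma_tau i j hij)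

theorem closure_range_generators (n : ℕ) :
    Submonoid.closure (Set.range (σI (n := n)) ∪ Set.range τI) = ⊤ := by
  rw [← PresentedMonoid.closure_range_of (ITRel n), ← Set.Sum.elim_range]
  congr 2
  exact funext fun x => by cases x <;> rfl

end

/-- Corollary `corollary9` of Kudryavtseva–Mazorchuk: the monoid `T` is finite and
`|T| ≤ Σ_{λ ⊢ n} (n!)² / Π_{i=1}^n (λ^{(i)}! (i!)^{2 λ^{(i)}})`, where `λ^{(i)}` is the
number of parts of the partition `λ` equal to `i`. -/
theorem IT_card_le (n : ℕ) (hn : 1 ≤ n) :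
    Finite (ITMonoid n) ∧
      Nat.card (ITMonoid n) ≤
        ∑ p : Nat.Partition n,
          n.factorial ^ 2 /
            ∏ i ∈ Finset.Icc 1 n,
              ((p.parts.count i).factorial * i.factorial ^ (2 * p.parts.count i)) := by
  have hcard := (itRelations_generators n).finite_and_card_le (closure_range_generators n)
  rwa [Nat.sub_add_cancel hn] at hcard
end
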